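/- Let K be a number field whose ring of integers 𝒪 = 𝓞_K has infinitely many units. Let E(2,𝓞_K) be the subgroup of SL(2,𝓞_K) generated by all elementary matrices [[1,λ],[0,1]] and [[1,0],[λ,1]] for λ ∈ 𝓞_K, and let B be the subgroup of E(2,𝓞_K) consisting of its upper triangular matrices. Then for every λ ∈ 𝓞_K, the element u = [[1,λ],[0,1]] is a stubborn element of B: for every subgroup H ≤ B with [B : H] ≤ 2 there exists an integer k > 0 such that uᵏ lies in the commutator subgroup [H,H]. -/

import Mathlib

open NumberField

/-- The elementary subgroup `E(2,R)` of `SL(2,R)`: the subgroup generated by the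
elementary matrices `[[1,t],[0,1]]` and `[[1,0],[t,1]]` for `t ∈ R`. -/
def elementarySubgroup (R : Type*) [CommRing R] :
    Subgroup (Matrix.SpecialLinearGroup (Fin 2) R) :=
  Subgroup.closure {g | ∃ t : R,
    (g : Matrix (Fin 2) (Fin 2) R) = !![1, t; 0, 1] ∨
    (g : Matrix (Fin 2) (Fin 2) R) = !![1, 0; t, 1]}

/-- The subgroup of upper triangular matrices in `SL(2,R)`. -/
def upperTriangularSL2 (R : Type*) [CommRing R] :
    Subgroup (Matrix.SpecialLinearGroup (Fin 2) R) where
  carrier := {g | (g : Matrix (Fin 2) (Fin 2) R) 1 0 = 0}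
  one_mem' := by
    simp [Matrix.SpecialLinearGroup.coe_one, Matrix.one_apply_ne]
  mul_mem' := by
    intro a b ha hb
    simp only [Set.mem_setOf_eq] at *
    rw [Matrix.SpecialLinearGroup.coe_mul, Matrix.mul_apply, Fin.sum_univ_two, ha, hb]
    ring
  inv_mem' := by
    intro a ha
    simp only [Set.mem_setOf_eq] at *
    rw [Matrix.SpecialLinearGroup.SL2_inv_expl]
    simp [ha]

/-- The upper elementary matrix. -/
def uMat {R : Type*} [CommRing R] (t : R) : Matrix.SpecialLinearGroup (Fin 2) R :=
  ⟨!![1, t; 0, 1], by simp⟩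

/-- The lower elementary matrix. -/
def lMat {R : Type*} [CommRing R] (t : R) : Matrix.SpecialLinearGroup (Fin 2) R :=
  ⟨!![1, 0; t, 1], by simp⟩

/-- The diagonal matrix of a unit. -/
def dMat {R : Type*} [CommRing R] (e : Rˣ) : Matrix.SpecialLinearGroup (Fin 2) R :=
  ⟨!![(e : R), 0; 0, ((e⁻¹ : Rˣ) : R)], by simp⟩

lemma uMat_coe {R : Type*} [CommRing R] (t : R) :
    (uMat t : Matrix (Fin 2) (Fin 2) R) = !![1, t; 0, 1] := rfl

lemma lMat_coe {R : Type*} [CommRing R] (t : R) :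
    (lMat t : Matrix (Fin 2) (Fin 2) R) = !![1, 0; t, 1] := rfl

lemma dMat_coe {R : Type*} [CommRing R] (e : Rˣ) :
    (dMat e : Matrix (Fin 2) (Fin 2) R) = !![(e : R), 0; 0, ((e⁻¹ : Rˣ) : R)] := rfl

lemma uMat_mem {R : Type*} [CommRing R] (t : R) : uMat t ∈ elementarySubgroup R :=
  Subgroup.subset_closure ⟨t, Or.inl rfl⟩

lemma lMat_mem {R : Type*} [CommRing R] (t : R) : lMat t ∈ elementarySubgroup R :=
  Subgroup.subset_closure ⟨t, Or.inr rfl⟩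

lemma dMat_mem {R : Type*} [CommRing R] (e : Rˣ) : dMat e ∈ elementarySubgroup R := by
  have h : dMat e = (uMat (e : R) * lMat (-((e⁻¹ : Rˣ) : R)) * uMat (e : R)) *
      (uMat (-1) * lMat 1 * uMat (-1)) := by
    ext i j
    fin_cases i <;> fin_cases j <;> simp [dMat_coe, uMat_coe, lMat_coe, Matrix.mul_apply, Fin.sum_univ_two]
  rw [h]
  have := @uMat_mem R _
  have := @lMat_mem R _
  apply_rules [Subgroup.mul_mem]

lemma uMat_mul {R : Type*} [CommRing R] (s t : R) : uMat s * uMat t = uMat (s + t) := by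
  ext i j
  fin_cases i <;> fin_cases j <;>
    simp [uMat_coe, Matrix.mul_apply, Fin.sum_univ_two, add_comm]

lemma uMat_pow {R : Type*} [CommRing R] (t : R) (k : ℕ) : uMat t ^ k = uMat (k * t) := by
  induction k with
  | zero =>
    ext i j
    fin_cases i <;> fin_cases j <;> simp [uMat_coe]
  | succ n ih => rw [pow_succ, ih, uMat_mul]; congr 1; push_cast; ring

lemma dMat_mul_uMat {R : Type*} [CommRing R] (e : Rˣ) (t : R) :
    dMat e * uMat t = uMat ((e : R) ^ 2 * t) * dMat e := by
  ext i j
  fin_cases i <;> fin_cases j <;>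
    simp [uMat_coe, dMat_coe, Matrix.mul_apply, Fin.sum_univ_two]
  rw [pow_two, mul_right_comm, mul_assoc (e : R) e, mul_assoc]
  rw [mul_assoc]
  simp

lemma comm_eq {R : Type*} [CommRing R] (e : Rˣ) (t : R) :
    dMat e ^ 2 * uMat t * (dMat e ^ 2)⁻¹ * (uMat t)⁻¹ = uMat (((e : R) ^ 4 - 1) * t) := by
  rw [mul_inv_eq_iff_eq_mul, mul_inv_eq_iff_eq_mul, uMat_mul, pow_two,
    mul_assoc, dMat_mul_uMat, ← mul_assoc, dMat_mul_uMat, mul_assoc]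
  congr 2
  ring

lemma exists_unit (R : Type*) [CommRing R] [IsDomain R] (h : Infinite Rˣ) :
    ∃ e : Rˣ, (e : R) ^ 4 - 1 ≠ 0 := by
  by_contra! hc
  have : (rootsOfUnity 4 R) = ⊤ := by
    ext e
    simp only [mem_rootsOfUnity, Subgroup.mem_top, iff_true]
    ext
    simpa using sub_eq_zero.mp (hc e)
  have h1 : Finite (rootsOfUnity 4 R) := inferInstance
  rw [this] at h1
  have : Finite Rˣ := Finite.of_equiv _ (Subgroup.topEquiv (G := Rˣ)).toEquiv
  exact not_finite Rˣ

/-- Let `K` be a number field whose ring of integers has infinitely many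
units, `E = E(2, 𝓞 K)` the elementary subgroup of `SL(2, 𝓞 K)`, and `B ≤ E` its subgroup
of upper triangular matrices. Then for every `lam : 𝓞 K`, the element `u = [[1,lam],[0,1]]`
of `B` is stubborn in `B`: for every subgroup `H` of `B` of index at most 2 there is a
`k > 0` with `u ^ k ∈ [H, H]`. -/
theorem elementary_unipotent_is_stubborn
    (K : Type*) [Field K] [NumberField K]
    (hunits : Infinite (𝓞 K)ˣ)
    (lam : 𝓞 K)
    -- `B` is the subgroup of upper triangular matrices of `E(2, 𝓞 K)`
    (B : Subgroup (Matrix.SpecialLinearGroup (Fin 2) (𝓞 K)))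
    (hB : B = elementarySubgroup (𝓞 K) ⊓ upperTriangularSL2 (𝓞 K))
    -- `u = [[1, lam],[0, 1]]`, as an element of `B`
    (u : B)
    (hu : ((u : Matrix.SpecialLinearGroup (Fin 2) (𝓞 K)) : Matrix (Fin 2) (Fin 2) (𝓞 K)) =
      !![1, lam; 0, 1]) :
    ∀ H : Subgroup B, (H.index = 1 ∨ H.index = 2) →
      ∃ k : ℕ, 0 < k ∧ u ^ k ∈ ⁅H, H⁆ := by
  intro H hH
  obtain ⟨e, he⟩ := exists_unit (𝓞 K) hunits
  have hsq : ∀ g : B, g ^ 2 ∈ H := by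
    intro g
    rcases hH with h | h
    · rw [Subgroup.index_eq_one.mp h]; trivial
    · exact Subgroup.sq_mem_of_index_two h g
  have hub : ∀ t : 𝓞 K, uMat t ∈ B := fun t => by
    rw [hB]; exact ⟨uMat_mem t, rfl⟩
  have hdb : dMat e ∈ B := by
    rw [hB]; exact ⟨dMat_mem e, rfl⟩
  set a : 𝓞 K := ((e : 𝓞 K) ^ 4 - 1) * 2 with ha
  have ha0 : a ≠ 0 := mul_ne_zero he two_ne_zero
  obtain ⟨y, hy⟩ := Ideal.mem_span_singleton'.mp (Ideal.absNorm_mem (Ideal.span {a}))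
  refine ⟨Ideal.absNorm (Ideal.span {a}), Nat.pos_of_ne_zero ?_, ?_⟩
  · rw [Ne, Ideal.absNorm_eq_zero_iff, Ideal.span_singleton_eq_bot]
    exact ha0
  · have hu' : (u : Matrix.SpecialLinearGroup (Fin 2) (𝓞 K)) = uMat lam := Subtype.ext hu
    have key := Subgroup.commutator_mem_commutator (hsq ⟨dMat e, hdb⟩)
      (hsq ⟨uMat (y * lam), hub _⟩)
    rw [commutatorElement_def] at key
    convert key using 1
    apply Subtype.ext
    simp only [Subgroup.coe_mul, Subgroup.coe_inv, Subgroup.coe_pow]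
    rw [uMat_pow _ 2, comm_eq, hu', uMat_pow, ← hy, ha]
    congr 1
    push_cast
    ring
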